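/- For all n ≥ 1, the number of nonnesting permutations of the multiset {1,1,2,2,…,n,n} that avoid both patterns 1322 and 2231 equals binom(2n,n) − 2^(n−1). -/

import Mathlib

/-- `w` is a permutation of the multiset `{1,1,2,2,…,n,n}`:
a word in which every value in `{1,…,n}` occurs exactly twice
and no other value occurs. -/
def IsMultisetPerm (n : ℕ) (w : List ℕ) : Prop :=
  ∀ i : ℕ, w.count i = if 1 ≤ i ∧ i ≤ n then 2 else 0

/-- `t` is order-isomorphic to the word `σ`:
same length, and entries compare (both `<` and `=`) in the same way. -/
def OrderIsoWord (t σ : List ℕ) : Prop :=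
  t.length = σ.length ∧
  ∀ r s : ℕ, r < σ.length → s < σ.length →
    ((t.getD r 0 < t.getD s 0 ↔ σ.getD r 0 < σ.getD s 0) ∧
     (t.getD r 0 = t.getD s 0 ↔ σ.getD r 0 = σ.getD s 0))

/-- `w` contains the pattern `σ`: some subsequence of `w`
is order-isomorphic to `σ`. -/
def Contains (w σ : List ℕ) : Prop :=
  ∃ t : List ℕ, t.Sublist w ∧ OrderIsoWord t σ

/-- `w` avoids the pattern `σ`. -/
def Avoids (w σ : List ℕ) : Prop := ¬ Contains w σ

/-- `w` is a nonnesting permutation of `{1,1,2,2,…,n,n}`: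
it avoids the patterns `1221` and `2112`. -/
def IsNonnesting (n : ℕ) (w : List ℕ) : Prop :=
  IsMultisetPerm n w ∧ Avoids w [1,2,2,1] ∧ Avoids w [2,1,1,2]

/-!
By `1221` and `1322`, every letter to the left of both copies of the maximum is larger than every
letter to the right of both, and by symmetry also smaller; so the maximum stands at one end of the
word. Up to reversal, an admissible word on `n + 1` letters therefore arises from one on `n` letters
by putting one copy of `n + 1` in front and the other at an active site. The site counts of the new
word and of its reverse depend only on the rank of the chosen site among the active ones and on
whether the new word is a concatenation of two words with distinct letters. This gives a closed
formula for the number of descendants of a word after `k` insertions, verified by Pascal's rule.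
-/

open Finset
open scoped List

theorem orderIsoWord_iff_exists_map {t σ : List ℕ} :
    OrderIsoWord t σ ↔ ∃ f : ℕ → ℕ, StrictMonoOn f {x | x ∈ σ} ∧ t = σ.map f := by
  constructor
  · rintro ⟨hlen, h⟩
    have hf (r : ℕ) (hr : r < σ.length) : t.getD (σ.idxOf σ[r]) 0 = t[r] := by
      have := (h (σ.idxOf σ[r]) r (List.idxOf_lt_length_of_mem (List.getElem_mem hr)) hr).2
      grind
    refine ⟨fun x ↦ t.getD (σ.idxOf x) 0, fun a ha b hb hab ↦ ?_, ?_⟩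
    · have hlt := (h _ _ (List.idxOf_lt_length_of_mem ha) (List.idxOf_lt_length_of_mem hb)).1
      grind
    · exact List.ext_getElem (by simp [hlen]) fun r _ hr ↦ by grind
  · rintro ⟨f, hf, rfl⟩
    refine ⟨by simp, fun r s hr hs ↦ ?_⟩
    have hlt := hf.lt_iff_lt (List.getElem_mem hr) (List.getElem_mem hs)
    have heq := hf.injOn.eq_iff (List.getElem_mem hr) (List.getElem_mem hs)
    simpa [hr, hs] using ⟨hlt, heq⟩

theorem contains_iff_exists_map_sublist {w σ : List ℕ} :
    Contains w σ ↔ ∃ f : ℕ → ℕ, StrictMonoOn f {x | x ∈ σ} ∧ σ.map f <+ w := by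
  simp only [Contains, orderIsoWord_iff_exists_map]
  grind

theorem Avoids.of_sublist {v w σ : List ℕ} (h : Avoids w σ) (hvw : v <+ w) : Avoids v σ :=
  fun ⟨t, ht, hσ⟩ ↦ h ⟨t, ht.trans hvw, hσ⟩

theorem avoids_nil {σ : List ℕ} (hσ : σ ≠ []) : Avoids [] σ := by
  rintro ⟨t, ht, hlen, -⟩
  rw [List.sublist_nil.1 ht] at hlen
  exact hσ (List.length_eq_zero_iff.1 hlen.symm)

theorem avoids_reverse_iff {w σ : List ℕ} : Avoids w.reverse σ ↔ Avoids w σ.reverse := by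
  simp only [Avoids, contains_iff_exists_map_sublist, List.mem_reverse, List.map_reverse]
  simp only [← List.reverse_sublist (l₂ := w), List.reverse_reverse]

theorem avoids_1221_iff {w : List ℕ} :
    Avoids w [1, 2, 2, 1] ↔ ∀ a b, a < b → ¬ [a, b, b, a] <+ w := by
  simp only [Avoids, contains_iff_exists_map_sublist, not_exists, not_and]
  exact ⟨fun h a b hab ↦ h (fun x ↦ if x = 1 then a else b) (by intro; grind),
    fun h f hf ↦ h _ _ (hf (by simp) (by simp) one_lt_two)⟩

theorem avoids_2112_iff {w : List ℕ} :
    Avoids w [2, 1, 1, 2] ↔ ∀ a b, a < b → ¬ [b, a, a, b] <+ w := by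
  simp only [Avoids, contains_iff_exists_map_sublist, not_exists, not_and]
  exact ⟨fun h a b hab ↦ h (fun x ↦ if x = 1 then a else b) (by intro; grind),
    fun h f hf ↦ h _ _ (hf (by simp) (by simp) one_lt_two)⟩

theorem avoids_1322_iff {w : List ℕ} :
    Avoids w [1, 3, 2, 2] ↔ ∀ a b c, a < b → b < c → ¬ [a, c, b, b] <+ w := by
  simp only [Avoids, contains_iff_exists_map_sublist, not_exists, not_and]
  refine ⟨fun h a b c hab hbc ↦
      h (fun x ↦ if x = 1 then a else if x = 2 then b else c) (by intro; grind),
    fun h f hf ↦ h _ _ _ (hf ?_ ?_ one_lt_two) (hf ?_ ?_ (Nat.lt_succ_self 2))⟩ <;> simp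

theorem avoids_2231_iff {w : List ℕ} :
    Avoids w [2, 2, 3, 1] ↔ ∀ a b c, a < b → b < c → ¬ [b, b, c, a] <+ w := by
  rw [← w.reverse_reverse, avoids_reverse_iff, List.reverse_reverse]
  refine avoids_1322_iff.trans ?_
  simp only [← List.reverse_sublist (l₂ := w), List.reverse_cons, List.reverse_nil,
    List.nil_append, List.cons_append]

/-- The word avoids the four patterns `1221`, `2112`, `1322` and `2231`. -/
def AvoidsPatterns (w : List ℕ) : Prop :=
  Avoids w [1, 2, 2, 1] ∧ Avoids w [2, 1, 1, 2] ∧ Avoids w [1, 3, 2, 2] ∧ Avoids w [2, 2, 3, 1]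

theorem AvoidsPatterns.reverse {w : List ℕ} (h : AvoidsPatterns w) :
    AvoidsPatterns w.reverse := by
  simpa [AvoidsPatterns, avoids_reverse_iff, and_comm] using h

/-- The words counted by the theorem: permutations of `{1,1,…,n,n}` avoiding the four patterns. -/
def IsAdmissible (n : ℕ) (w : List ℕ) : Prop :=
  IsMultisetPerm n w ∧ AvoidsPatterns w

theorem isAdmissible_iff {n : ℕ} {w : List ℕ} :
    IsAdmissible n w ↔ IsNonnesting n w ∧ Avoids w [1, 3, 2, 2] ∧ Avoids w [2, 2, 3, 1] := by
  simp only [IsAdmissible, AvoidsPatterns, IsNonnesting, and_assoc]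

theorem IsMultisetPerm.reverse {n : ℕ} {w : List ℕ} (h : IsMultisetPerm n w) :
    IsMultisetPerm n w.reverse := fun i ↦ by
  rw [List.count_reverse, h i]

theorem IsMultisetPerm.mem_iff {n : ℕ} {w : List ℕ} (h : IsMultisetPerm n w) {a : ℕ} :
    a ∈ w ↔ 1 ≤ a ∧ a ≤ n := by
  rw [← List.count_pos_iff, h a]
  split_ifs with ha <;> simp [ha]

theorem IsMultisetPerm.count_eq_two {n : ℕ} {w : List ℕ} (h : IsMultisetPerm n w) :
    ∀ a ∈ w, w.count a = 2 := fun a ha ↦ by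
  rw [h a, if_pos (h.mem_iff.1 ha)]

theorem IsMultisetPerm.lt_succ {n : ℕ} {w : List ℕ} (h : IsMultisetPerm n w) :
    ∀ a ∈ w, a < n + 1 := fun _ ha ↦
  Nat.lt_succ_of_le (h.mem_iff.1 ha).2

theorem IsAdmissible.reverse {n : ℕ} {w : List ℕ} (h : IsAdmissible n w) :
    IsAdmissible n w.reverse :=
  ⟨h.1.reverse, h.2.reverse⟩

theorem isAdmissible_reverse_iff {n : ℕ} {w : List ℕ} :
    IsAdmissible n w.reverse ↔ IsAdmissible n w :=
  ⟨fun h ↦ w.reverse_reverse ▸ h.reverse, IsAdmissible.reverse⟩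

/-- The word obtained from `y ++ z` by putting one copy of `M` in front and another one at the cut
between `y` and `z`. -/
def insertMax (M : ℕ) (y z : List ℕ) : List ℕ :=
  M :: (y ++ M :: z)

/-- A cut `y ++ z` of a word is active if a new maximum can be inserted in front and at this cut
without creating a forbidden pattern. -/
def IsActive (y z : List ℕ) : Prop :=
  y.Nodup ∧ ∀ a ∈ y, ∀ b ∈ z, z.Duplicate b → b ≤ a

instance (y z : List ℕ) : Decidable (IsActive y z) :=
  inferInstanceAs (Decidable (y.Nodup ∧ ∀ a ∈ y, ∀ b ∈ z, z.Duplicate b → b ≤ a))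

theorem isActive_iff {y z : List ℕ} :
    IsActive y z ↔ y.Nodup ∧ ∀ a ∈ y, ∀ b, z.Duplicate b → b ≤ a :=
  ⟨fun h ↦ ⟨h.1, fun a ha b hb ↦ h.2 a ha b hb.mem hb⟩,
    fun h ↦ ⟨h.1, fun a ha b _ hb ↦ h.2 a ha b hb⟩⟩

theorem append_cons_sublist_append_cons_iff {α : Type*} {a : α} {l₁ l₂ r₁ r₂ : List α}
    (h₁ : a ∉ r₁) (h₂ : a ∉ r₂) :
    l₁ ++ a :: l₂ <+ r₁ ++ a :: r₂ ↔ l₁ <+ r₁ ∧ l₂ <+ r₂ := by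
  refine ⟨fun h ↦ ?_, fun ⟨hl, hr⟩ ↦ hl.append (hr.cons_cons a)⟩
  obtain ⟨s₁, s₂, hs, hs₁, hs₂⟩ := List.append_sublist_iff.1 h
  obtain ⟨t₁, t₂, rfl, ht₁, ht₂⟩ := List.cons_sublist_iff.1 hs₂
  obtain ⟨u, v, rfl⟩ := List.append_of_mem ht₁
  obtain ⟨rfl, -, rfl⟩ :=
    (List.append_cons_inj_of_notMem (x₂ := s₁ ++ u) (z₂ := v ++ t₂) h₁ h₂).1 (by simpa using hs)
  exact ⟨hs₁.trans (List.sublist_append_left _ _), ht₂.trans (List.sublist_append_right _ _)⟩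

theorem notMem_of_forall_lt {α : Type*} [Preorder α] {l : List α} {M : α} (h : ∀ a ∈ l, a < M) :
    M ∉ l :=
  fun hM ↦ (h M hM).false

section InsertMax

variable {M : ℕ} {y z : List ℕ}

theorem count_insertMax (i : ℕ) :
    (insertMax M y z).count i = (y ++ z).count i + if M = i then 2 else 0 := by
  grind [insertMax]

theorem isMultisetPerm_insertMax_iff {n : ℕ} :
    IsMultisetPerm (n + 1) (insertMax (n + 1) y z) ↔ IsMultisetPerm n (y ++ z) := by
  refine forall_congr' fun i ↦ ?_
  rw [count_insertMax]
  grind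

theorem sublist_insertMax : y ++ z <+ insertMax M y z :=
  ((List.sublist_cons_self M z).append_left y).cons M

theorem sublist_insertMax_iff_of_notMem {l : List ℕ} (hl : M ∉ l) :
    l <+ insertMax M y z ↔ l <+ y ++ z := by
  refine ⟨fun h ↦ ?_, fun h ↦ h.trans sublist_insertMax⟩
  have hfilter := h.filter (· ≠ M)
  rw [List.filter_eq_self.2 (by grind), insertMax, List.filter_cons_of_neg (by simp),
    List.filter_append, List.filter_cons_of_neg (by simp)] at hfilter
  exact hfilter.trans (List.filter_sublist.append List.filter_sublist)

theorem cons_append_cons_sublist_insertMax_iff {l₁ l₂ : List ℕ} (hM : M ∉ y ++ z) :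
    M :: (l₁ ++ M :: l₂) <+ insertMax M y z ↔ l₁ <+ y ∧ l₂ <+ z := by
  rw [List.mem_append, not_or] at hM
  rw [insertMax, List.cons_sublist_cons, append_cons_sublist_append_cons_iff hM.1 hM.2]

theorem append_cons_sublist_insertMax_iff {l₁ l₂ : List ℕ} (hM : M ∉ y ++ z) (hl₁ : l₁ ≠ [])
    (hMl₁ : M ∉ l₁) : l₁ ++ M :: l₂ <+ insertMax M y z ↔ l₁ <+ y ∧ l₂ <+ z := by
  rw [← cons_append_cons_sublist_insertMax_iff hM]
  refine ⟨fun h ↦ ?_, fun h ↦ (List.sublist_cons_self M _).trans h⟩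
  cases l₁ with
  | nil => contradiction
  | cons b l₁ => exact (h.of_cons_of_ne (by grind)).cons_cons M

theorem le_of_mem_insertMax (hM : ∀ a ∈ y ++ z, a < M) {a : ℕ} (ha : a ∈ insertMax M y z) :
    a ≤ M := by
  simp only [insertMax, List.mem_cons, List.mem_append] at ha hM
  grind

theorem avoids_1221_insertMax_iff (hM : ∀ a ∈ y ++ z, a < M) :
    Avoids (insertMax M y z) [1, 2, 2, 1] ↔ Avoids (y ++ z) [1, 2, 2, 1] := by
  have hM' := notMem_of_forall_lt hM
  refine ⟨fun h ↦ h.of_sublist sublist_insertMax, fun h ↦ ?_⟩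
  rw [avoids_1221_iff] at h ⊢
  intro a b hab hs
  obtain rfl | hbM := (le_of_mem_insertMax hM (a := b) (hs.subset (by simp))).eq_or_lt
  · have := ((append_cons_sublist_insertMax_iff (l₁ := [a]) hM' (by simp) (by grind)).1 hs).2
    exact hM' (List.mem_append_right y (this.subset (by simp)))
  · refine h a b hab ((sublist_insertMax_iff_of_notMem ?_).1 hs)
    simp only [List.mem_cons, List.not_mem_nil, or_false]
    omega

theorem avoids_2112_insertMax_iff (hM : ∀ a ∈ y ++ z, a < M) :
    Avoids (insertMax M y z) [2, 1, 1, 2] ↔ Avoids (y ++ z) [2, 1, 1, 2] ∧ y.Nodup := by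
  have hM' := notMem_of_forall_lt hM
  have hMaaM (a : ℕ) : [M, a, a, M] <+ insertMax M y z ↔ [a, a] <+ y := by
    exact (cons_append_cons_sublist_insertMax_iff (l₁ := [a, a]) (l₂ := []) hM').trans (by simp)
  refine ⟨fun h ↦ ⟨h.of_sublist sublist_insertMax, ?_⟩, fun ⟨h, hnodup⟩ ↦ ?_⟩
  · rw [avoids_2112_iff] at h
    refine List.nodup_iff_sublist.2 fun a ha ↦ ?_
    have haM : a < M := hM a (List.mem_append_left z (ha.subset (by simp)))
    exact h a M haM ((hMaaM a).2 ha)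
  · rw [avoids_2112_iff] at h ⊢
    intro a b hab hs
    obtain rfl | hbM := (le_of_mem_insertMax hM (a := b) (hs.subset (by simp))).eq_or_lt
    · exact List.nodup_iff_sublist.1 hnodup a ((hMaaM a).1 hs)
    · refine h a b hab ((sublist_insertMax_iff_of_notMem ?_).1 hs)
      simp only [List.mem_cons, List.not_mem_nil, or_false]
      omega

theorem avoids_1322_insertMax_iff (hM : ∀ a ∈ y ++ z, a < M) :
    Avoids (insertMax M y z) [1, 3, 2, 2] ↔
      Avoids (y ++ z) [1, 3, 2, 2] ∧ ∀ a ∈ y, ∀ b ∈ z, z.Duplicate b → b ≤ a := by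
  have hM' := notMem_of_forall_lt hM
  have haMbb (a b : ℕ) (ha : a ≠ M) :
      [a, M, b, b] <+ insertMax M y z ↔ a ∈ y ∧ z.Duplicate b := by
    rw [← List.singleton_sublist, List.duplicate_iff_sublist]
    exact append_cons_sublist_insertMax_iff (l₁ := [a]) hM' (by simp) (by grind)
  refine ⟨fun h ↦ ⟨h.of_sublist sublist_insertMax, fun a ha b hb hdup ↦ ?_⟩, fun ⟨h, hle⟩ ↦ ?_⟩
  · rw [avoids_1322_iff] at h
    by_contra! hab
    have hbM : b < M := hM b (List.mem_append_right y hb)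
    exact h a b M hab hbM ((haMbb a b (hab.trans hbM).ne).2 ⟨ha, hdup⟩)
  · rw [avoids_1322_iff] at h ⊢
    intro a b c hab hbc hs
    obtain rfl | hcM := (le_of_mem_insertMax hM (a := c) (hs.subset (by simp))).eq_or_lt
    · obtain ⟨ha, hdup⟩ := (haMbb a b (hab.trans hbc).ne).1 hs
      exact hab.not_ge (hle a ha b hdup.mem hdup)
    · refine h a b c hab hbc ((sublist_insertMax_iff_of_notMem ?_).1 hs)
      simp only [List.mem_cons, List.not_mem_nil, or_false]
      omega

theorem avoids_2231_insertMax_iff (hM : ∀ a ∈ y ++ z, a < M) (hnodup : y.Nodup) :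
    Avoids (insertMax M y z) [2, 2, 3, 1] ↔ Avoids (y ++ z) [2, 2, 3, 1] := by
  have hM' := notMem_of_forall_lt hM
  refine ⟨fun h ↦ h.of_sublist sublist_insertMax, fun h ↦ ?_⟩
  rw [avoids_2231_iff] at h ⊢
  intro a b c hab hbc hs
  obtain rfl | hcM := (le_of_mem_insertMax hM (a := c) (hs.subset (by simp))).eq_or_lt
  · have := (append_cons_sublist_insertMax_iff (l₁ := [b, b]) hM' (by simp) (by grind)).1 hs
    exact List.nodup_iff_sublist.1 hnodup b this.1
  · refine h a b c hab hbc ((sublist_insertMax_iff_of_notMem ?_).1 hs)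
    simp only [List.mem_cons, List.not_mem_nil, or_false]
    omega

theorem avoidsPatterns_insertMax_iff (hM : ∀ a ∈ y ++ z, a < M) :
    AvoidsPatterns (insertMax M y z) ↔ AvoidsPatterns (y ++ z) ∧ IsActive y z := by
  have h2231 := avoids_2231_insertMax_iff hM
  simp only [AvoidsPatterns, IsActive, avoids_1221_insertMax_iff hM, avoids_2112_insertMax_iff hM,
    avoids_1322_insertMax_iff hM]
  tauto

theorem isAdmissible_insertMax_iff {n : ℕ} :
    IsAdmissible (n + 1) (insertMax (n + 1) y z) ↔ IsAdmissible n (y ++ z) ∧ IsActive y z := by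
  rw [IsAdmissible, IsAdmissible, isMultisetPerm_insertMax_iff, and_assoc]
  exact and_congr_right fun h ↦ avoidsPatterns_insertMax_iff h.lt_succ

end InsertMax

theorem AvoidsPatterns.lt_of_mem_outer {M : ℕ} {x y z : List ℕ}
    (h : AvoidsPatterns (x ++ M :: (y ++ M :: z))) (hM : ∀ a ∈ x ++ y ++ z, a < M)
    (hcount : ∀ a ∈ x ++ y ++ z, (x ++ y ++ z).count a = 2) : ∀ a ∈ x, ∀ b ∈ z, b < a := by
  intro a ha b hb
  have hbM : b < M := hM b (by simp [hb])
  have hb_notMem : b ∉ x := fun hbx ↦ avoids_1221_iff.1 h.1 b M hbM <|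
    (List.singleton_sublist.2 hbx).append <|
      ((List.nil_sublist y).append ((List.singleton_sublist.2 hb).cons_cons M)).cons_cons M
  by_contra! hab
  obtain rfl | hab := hab.eq_or_lt
  · exact hb_notMem ha
  · have hbb : [b, b] <+ y ++ z := by
      rw [← List.duplicate_iff_sublist, List.duplicate_iff_two_le_count]
      have := hcount b (by simp [hb])
      grind [List.count_eq_zero]
    exact avoids_1322_iff.1 h.2.2.1 a b M hab hbM <| (List.singleton_sublist.2 ha).append <|
      (hbb.trans ((List.sublist_cons_self M z).append_left y)).cons_cons M

theorem AvoidsPatterns.eq_nil_or_eq_nil {M : ℕ} {x y z : List ℕ}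
    (h : AvoidsPatterns (x ++ M :: (y ++ M :: z))) (hM : ∀ a ∈ x ++ y ++ z, a < M)
    (hcount : ∀ a ∈ x ++ y ++ z, (x ++ y ++ z).count a = 2) : x = [] ∨ z = [] := by
  by_contra! hne
  obtain ⟨a, ha⟩ := List.exists_mem_of_ne_nil x hne.1
  obtain ⟨b, hb⟩ := List.exists_mem_of_ne_nil z hne.2
  have hreverse : AvoidsPatterns (z.reverse ++ M :: (y.reverse ++ M :: x.reverse)) := by
    simpa using h.reverse
  have hperm : z.reverse ++ y.reverse ++ x.reverse ~ x ++ y ++ z := by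
    simpa using List.reverse_perm (x ++ y ++ z)
  refine (h.lt_of_mem_outer hM hcount a ha b hb).asymm
    (hreverse.lt_of_mem_outer (fun c hc ↦ hM c (hperm.mem_iff.1 hc)) (fun c hc ↦ ?_)
      b (List.mem_reverse.2 hb) a (List.mem_reverse.2 ha))
  rw [hperm.count_eq, hcount c (hperm.mem_iff.1 hc)]

theorem exists_eq_append_cons_append_cons_of_count_eq_two {α : Type*} [DecidableEq α] {a : α}
    {l : List α} (h : l.count a = 2) : ∃ x y z, l = x ++ a :: (y ++ a :: z) := by
  obtain ⟨x, l', rfl, hx⟩ := List.eq_append_cons_of_mem (List.count_pos_iff.1 (h.symm ▸ two_pos))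
  have hl' : a ∈ l' := by
    rw [← List.count_pos_iff]
    rw [List.count_append, List.count_eq_zero.2 hx, List.count_cons_self] at h
    omega
  obtain ⟨y, z, rfl⟩ := List.append_of_mem hl'
  exact ⟨x, y, z, rfl⟩

theorem IsAdmissible.exists_insertMax {n : ℕ} {w : List ℕ} (h : IsAdmissible (n + 1) w) :
    ∃ y z, w = insertMax (n + 1) y z ∨ w.reverse = insertMax (n + 1) y z := by
  obtain ⟨x, y, z, rfl⟩ :=
    exists_eq_append_cons_append_cons_of_count_eq_two ((h.1 (n + 1)).trans (if_pos (by simp)))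
  have hperm : IsMultisetPerm n (x ++ y ++ z) := fun i ↦ by
    have := h.1 i
    grind
  obtain rfl | rfl := h.2.eq_nil_or_eq_nil hperm.lt_succ hperm.count_eq_two
  · exact ⟨y, z, .inl rfl⟩
  · exact ⟨y.reverse, x.reverse, .inr (by simp [insertMax])⟩

theorem IsActive.mem_of_count_eq_two {y z : List ℕ} (h : IsActive y z) {a : ℕ}
    (ha : (y ++ z).count a = 2) : a ∈ z := by
  have := List.nodup_iff_count_le_one.1 h.1 a
  rw [List.count_append] at ha
  exact List.count_pos_iff.1 (by omega)

/-- The active sites of `w` are the lengths of the prefixes `y` of the active cuts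
`w = y ++ z`. -/
def activeSites (w : List ℕ) : Finset ℕ :=
  {j ∈ range (w.length + 1) | IsActive (w.take j) (w.drop j)}

theorem mem_activeSites {w : List ℕ} {j : ℕ} :
    j ∈ activeSites w ↔ j ≤ w.length ∧ IsActive (w.take j) (w.drop j) := by
  rw [activeSites, mem_filter, mem_range, Nat.lt_succ_iff]

theorem length_mem_activeSites_append {y z : List ℕ} :
    y.length ∈ activeSites (y ++ z) ↔ IsActive y z := by
  simp [mem_activeSites]

theorem zero_mem_activeSites (w : List ℕ) : 0 ∈ activeSites w := by
  simp [mem_activeSites, IsActive]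

/-- The words obtained from `w` by putting one copy of `M` in front and another one at an active
site. -/
def frontChildren (M : ℕ) (w : List ℕ) : Finset (List ℕ) :=
  (activeSites w).image fun j ↦ insertMax M (w.take j) (w.drop j)

theorem mem_frontChildren {M : ℕ} {v w : List ℕ} :
    v ∈ frontChildren M w ↔ ∃ y z, y ++ z = w ∧ IsActive y z ∧ insertMax M y z = v := by
  simp only [frontChildren, mem_image]
  constructor
  · rintro ⟨j, hj, rfl⟩
    exact ⟨_, _, w.take_append_drop j, (mem_activeSites.1 hj).2, rfl⟩
  · rintro ⟨y, z, rfl, hyz, rfl⟩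
    exact ⟨y.length, length_mem_activeSites_append.2 hyz, by simp⟩

/-- The admissible words, generated by inserting the letters `1, 2, …` in turn; see
`mem_admissibleWords`. -/
def admissibleWords : ℕ → Finset (List ℕ)
  | 0 => {[]}
  | n + 1 =>
    (admissibleWords n).biUnion (frontChildren (n + 1)) ∪
      ((admissibleWords n).biUnion (frontChildren (n + 1))).image List.reverse

theorem isAdmissible_zero_iff {w : List ℕ} : IsAdmissible 0 w ↔ w = [] := by
  constructor
  · refine fun h ↦ List.eq_nil_iff_forall_not_mem.2 fun a ha ↦ ?_
    have := h.1.mem_iff.1 ha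
    omega
  · rintro rfl
    refine ⟨fun i ↦ by grind, ?_, ?_, ?_, ?_⟩ <;> exact avoids_nil (List.cons_ne_nil _ _)

theorem mem_admissibleWords {n : ℕ} {w : List ℕ} :
    w ∈ admissibleWords n ↔ IsAdmissible n w := by
  induction n generalizing w with
  | zero => rw [admissibleWords, mem_singleton, isAdmissible_zero_iff]
  | succ n ih =>
    have hfront (v : List ℕ) : v ∈ (admissibleWords n).biUnion (frontChildren (n + 1)) ↔
        IsAdmissible (n + 1) v ∧ ∃ y z, v = insertMax (n + 1) y z := by
      simp only [mem_biUnion, ih, mem_frontChildren]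
      constructor
      · rintro ⟨_, hw, y, z, rfl, hyz, rfl⟩
        exact ⟨isAdmissible_insertMax_iff.2 ⟨hw, hyz⟩, y, z, rfl⟩
      · rintro ⟨hv, y, z, rfl⟩
        obtain ⟨hw, hyz⟩ := isAdmissible_insertMax_iff.1 hv
        exact ⟨_, hw, y, z, rfl, hyz, rfl⟩
    rw [admissibleWords, mem_union, mem_image]
    constructor
    · rintro (hw | ⟨v, hv, rfl⟩)
      · exact ((hfront w).1 hw).1
      · exact ((hfront v).1 hv).1.reverse
    · intro hw
      obtain ⟨y, z, h | h⟩ := hw.exists_insertMax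
      · exact .inl ((hfront w).2 ⟨hw, y, z, h⟩)
      · exact .inr ⟨w.reverse, (hfront _).2 ⟨hw.reverse, y, z, h⟩, w.reverse_reverse⟩

theorem insertMax_inj {M : ℕ} {y z y' z' : List ℕ} (hM : M ∉ y ++ z) :
    insertMax M y z = insertMax M y' z' ↔ y = y' ∧ z = z' := by
  rw [List.mem_append, not_or] at hM
  simp [insertMax, List.append_cons_inj_of_notMem hM.1 hM.2]

theorem sum_frontChildren {β : Type*} [AddCommMonoid β] {M : ℕ} {w : List ℕ} (hM : M ∉ w)
    (F : List ℕ → β) : ∑ v ∈ frontChildren M w, F v =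
      ∑ j ∈ activeSites w, F (insertMax M (w.take j) (w.drop j)) := by
  refine sum_image fun i hi j hj hij ↦ ?_
  have htake := ((insertMax_inj (by rwa [List.take_append_drop])).1 hij).1
  have hi := (mem_activeSites.1 hi).1
  have hj := (mem_activeSites.1 hj).1
  simpa [hi, hj] using congrArg List.length htake

theorem pairwiseDisjoint_frontChildren {M : ℕ} {s : Set (List ℕ)} (hM : ∀ w ∈ s, M ∉ w) :
    s.PairwiseDisjoint (frontChildren M) := by
  refine fun w hw w' _ hne ↦ disjoint_left.2 fun v hv hv' ↦ hne ?_
  obtain ⟨y, z, rfl, -, rfl⟩ := mem_frontChildren.1 hv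
  obtain ⟨y', z', rfl, -, h⟩ := mem_frontChildren.1 hv'
  obtain ⟨rfl, rfl⟩ := (insertMax_inj (hM _ hw)).1 h.symm
  rfl

theorem reverse_insertMax_ne_insertMax {M : ℕ} {y z y' z' : List ℕ} (hz : z ≠ []) (hM : M ∉ z) :
    (insertMax M y z).reverse ≠ insertMax M y' z' := by
  intro h
  have hlast : z.getLast hz = M := by
    simpa [insertMax, List.getLast?_eq_some_getLast hz] using congrArg List.head? h
  exact hM (hlast ▸ List.getLast_mem hz)

theorem sum_comp_reverse_admissibleWords {β : Type*} [AddCommMonoid β] (n : ℕ)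
    (F : List ℕ → β) :
    ∑ w ∈ admissibleWords n, F w.reverse = ∑ w ∈ admissibleWords n, F w :=
  sum_equiv (Equiv.ofBijective _ List.reverse_involutive.bijective)
    (fun _ ↦ by simp [mem_admissibleWords, isAdmissible_reverse_iff]) (by simp)

theorem sum_admissibleWords_succ {β : Type*} [AddCommMonoid β] {n : ℕ} (hn : 1 ≤ n)
    {F : List ℕ → β} (hF : ∀ w, F w.reverse = F w) :
    ∑ v ∈ admissibleWords (n + 1), F v = ∑ w ∈ admissibleWords n,
      (∑ v ∈ frontChildren (n + 1) w, F v + ∑ v ∈ frontChildren (n + 1) w.reverse, F v) := by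
  have hdisjoint : Disjoint ((admissibleWords n).biUnion (frontChildren (n + 1)))
      (((admissibleWords n).biUnion (frontChildren (n + 1))).image List.reverse) := by
    simp only [disjoint_left, mem_image, mem_biUnion, mem_admissibleWords, mem_frontChildren]
    rintro _ ⟨_, -, y', z', rfl, -, rfl⟩ ⟨_, ⟨_, hw, y, z, rfl, hyz, rfl⟩, h⟩
    have hone : 1 ∈ z := hyz.mem_of_count_eq_two ((hw.1 1).trans (if_pos ⟨le_rfl, hn⟩))
    exact reverse_insertMax_ne_insertMax (List.ne_nil_of_mem hone)
      (fun hz ↦ notMem_of_forall_lt hw.1.lt_succ (List.mem_append_right y hz)) h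
  have hfront : ∑ v ∈ (admissibleWords n).biUnion (frontChildren (n + 1)), F v =
      ∑ w ∈ admissibleWords n, ∑ v ∈ frontChildren (n + 1) w, F v :=
    sum_biUnion <| pairwiseDisjoint_frontChildren fun w hw ↦
      notMem_of_forall_lt (mem_admissibleWords.1 hw).1.lt_succ
  rw [admissibleWords, sum_union hdisjoint, sum_image List.reverse_injective.injOn, sum_add_distrib,
    sum_comp_reverse_admissibleWords n fun w ↦ ∑ v ∈ frontChildren (n + 1) w, F v]
  simp only [hF, hfront]

section ActiveSites

variable {M : ℕ} {y z : List ℕ}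

theorem isActive_cons_append_cons_iff {u v : List ℕ} (hM : ∀ a ∈ u ++ (v ++ z), a < M) :
    IsActive (M :: u) (v ++ M :: z) ↔ IsActive u (v ++ z) := by
  have hMu : M ∉ u := fun h ↦ (hM M (List.mem_append_left _ h)).false
  have hMvz : M ∉ v ++ z := fun h ↦ (hM M (List.mem_append_right _ h)).false
  have hdup (b : ℕ) : (v ++ M :: z).Duplicate b ↔ (v ++ z).Duplicate b := by
    have hperm : v ++ M :: z ~ M :: (v ++ z) := List.perm_middle
    simp only [List.duplicate_iff_two_le_count, hperm.count_eq]
    grind [List.count_eq_zero]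
  simp only [isActive_iff, List.nodup_cons, hMu, not_false_iff, true_and, hdup,
    List.forall_mem_cons]
  exact and_congr_right fun _ ↦ and_iff_right fun b hb ↦
    (hM b (List.mem_append_right _ hb.mem)).le

theorem succ_mem_activeSites_insertMax_iff (hM : ∀ a ∈ y ++ z, a < M) {i : ℕ} :
    i + 1 ∈ activeSites (insertMax M y z) ↔ i ≤ y.length ∧ i ∈ activeSites (y ++ z) := by
  obtain hi | hi := le_or_gt i y.length
  · obtain ⟨u, v, rfl, rfl⟩ : ∃ u v, y = u ++ v ∧ u.length = i :=
      ⟨y.take i, y.drop i, by simp, by simp [hi]⟩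
    have hcut : insertMax M (u ++ v) z = (M :: u) ++ (v ++ M :: z) := by simp [insertMax]
    rw [List.append_assoc] at hM ⊢
    rw [and_iff_right hi, hcut, ← List.length_cons, length_mem_activeSites_append,
      length_mem_activeSites_append, isActive_cons_append_cons_iff hM]
  · refine iff_of_false (fun h ↦ ?_) (fun h ↦ hi.not_ge h.1)
    obtain ⟨k, rfl⟩ := Nat.exists_eq_add_of_lt hi
    have hnodup := (mem_activeSites.1 h).2.1
    rw [insertMax, List.take_succ_cons, add_assoc, List.take_length_add_append,
      List.take_succ_cons] at hnodup
    simp at hnodup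

theorem card_activeSites_insertMax (hM : ∀ a ∈ y ++ z, a < M) :
    #(activeSites (insertMax M y z)) = #{i ∈ activeSites (y ++ z) | i ≤ y.length} + 1 := by
  have hsucc : activeSites (insertMax M y z) =
      insert 0 ({i ∈ activeSites (y ++ z) | i ≤ y.length}.image (· + 1)) := by
    ext j
    cases j with
    | zero => simp [zero_mem_activeSites]
    | succ i => simp [succ_mem_activeSites_insertMax_iff hM, and_comm]
  rw [hsucc, card_insert_of_notMem (by simp), card_image_of_injective _ (add_left_injective 1)]

theorem reverse_insertMax :
    (insertMax M y z).reverse = z.reverse ++ [M] ++ (y.reverse ++ [M]) := by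
  simp [insertMax]

theorem notMem_activeSites_reverse_insertMax_of_le (hM : ∀ a ∈ y ++ z, a < M) {j : ℕ}
    (hj₀ : 0 < j) (hj : j ≤ z.length) : j ∉ activeSites (insertMax M y z).reverse := by
  intro h
  have hactive := (isActive_iff.1 (mem_activeSites.1 h).2).2
  rw [reverse_insertMax, List.append_assoc, List.take_append_of_le_length (by simpa),
    List.drop_append_of_le_length (by simpa)] at hactive
  obtain ⟨a, ha⟩ := List.exists_mem_of_ne_nil (z.reverse.take j) <|
    List.ne_nil_of_length_pos (by simp; omega)
  have haM : a < M := hM a <|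
    List.mem_append_right y (List.mem_reverse.1 (List.mem_of_mem_take ha))
  refine haM.not_ge (hactive a ha M ?_)
  exact List.duplicate_iff_sublist.2 <|
    ((List.sublist_append_right y.reverse [M]).append_left [M]).trans
      (List.sublist_append_right _ _)

theorem notMem_activeSites_reverse_insertMax_of_lt (hyz : y ⊆ z) {j : ℕ}
    (hj : z.length + 1 < j) : j ∉ activeSites (insertMax M y z).reverse := by
  intro h
  obtain ⟨k, rfl⟩ := Nat.exists_eq_add_of_lt hj
  obtain ⟨c, l, hcl⟩ : ∃ c l, y.reverse ++ [M] = c :: l := List.exists_cons_of_ne_nil (by simp)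
  have hc : c ∈ z.reverse ++ [M] := by
    have : c ∈ y.reverse ++ [M] := hcl ▸ List.mem_cons_self
    grind
  have hlength : z.length + 1 + k + 1 = (z.reverse ++ [M]).length + (k + 1) := by
    simp [add_assoc]
  have hnodup := (mem_activeSites.1 h).2.1
  rw [reverse_insertMax, hcl, hlength, List.take_length_add_append, List.take_succ_cons] at hnodup
  exact List.disjoint_of_nodup_append hnodup hc List.mem_cons_self

theorem length_succ_mem_activeSites_reverse_insertMax_iff (hM : M ∉ y ++ z) (hy : y.Nodup) :
    z.length + 1 ∈ activeSites (insertMax M y z).reverse ↔ z.Nodup := by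
  have hy' : (y.reverse ++ [M]).Nodup := by grind
  have hz' : (z.reverse ++ [M]).Nodup ↔ z.Nodup := by grind
  have hlength : z.length + 1 = (z.reverse ++ [M]).length := by simp
  rw [reverse_insertMax, hlength, length_mem_activeSites_append, isActive_iff, hz',
    and_iff_left_iff_imp]
  exact fun _ _ _ _ hb ↦ absurd hy' hb.not_nodup

theorem mem_activeSites_reverse_insertMax_iff (hM : ∀ a ∈ y ++ z, a < M) (hy : y.Nodup)
    (hyz : y ⊆ z) {j : ℕ} :
    j ∈ activeSites (insertMax M y z).reverse ↔ j = 0 ∨ j = z.length + 1 ∧ z.Nodup := by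
  obtain rfl | hj₀ := j.eq_zero_or_pos
  · simp [zero_mem_activeSites]
  obtain hj | rfl | hj := lt_trichotomy j (z.length + 1)
  · simp [notMem_activeSites_reverse_insertMax_of_le hM hj₀ (Nat.le_of_lt_succ hj), hj₀.ne', hj.ne]
  · simp [length_succ_mem_activeSites_reverse_insertMax_iff (notMem_of_forall_lt hM) hy]
  · simp [notMem_activeSites_reverse_insertMax_of_lt hyz hj, hj₀.ne', hj.ne']

theorem card_activeSites_reverse_insertMax (hM : ∀ a ∈ y ++ z, a < M) (hy : y.Nodup)
    (hyz : y ⊆ z) : #(activeSites (insertMax M y z).reverse) = if z.Nodup then 2 else 1 := by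
  have hsites : activeSites (insertMax M y z).reverse =
      if z.Nodup then {0, z.length + 1} else {0} := by
    ext j
    rw [mem_activeSites_reverse_insertMax_iff hM hy hyz]
    split_ifs with hz <;> simp [hz]
  rw [hsites]
  split_ifs <;> simp

end ActiveSites

/-- The word is a concatenation of two words with distinct letters. -/
def IsNodupConcat (w : List ℕ) : Prop :=
  ∃ y z, w = y ++ z ∧ y.Nodup ∧ z.Nodup

noncomputable instance : DecidablePred IsNodupConcat := Classical.decPred _

theorem isNodupConcat_reverse_iff {w : List ℕ} : IsNodupConcat w.reverse ↔ IsNodupConcat w := by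
  have hreverse {v : List ℕ} : IsNodupConcat v → IsNodupConcat v.reverse := by
    rintro ⟨y, z, rfl, hy, hz⟩
    exact ⟨z.reverse, y.reverse, by simp, List.nodup_reverse.2 hz, List.nodup_reverse.2 hy⟩
  exact ⟨fun h ↦ w.reverse_reverse ▸ hreverse h, hreverse⟩

theorem isNodupConcat_insertMax_iff {M : ℕ} {y z : List ℕ} (hM : M ∉ y ++ z) (hy : y.Nodup) :
    IsNodupConcat (insertMax M y z) ↔ z.Nodup := by
  rw [List.mem_append, not_or] at hM
  constructor
  · rintro ⟨_ | ⟨a, u⟩, v, huv, hu, hv⟩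
    · obtain rfl : insertMax M y z = v := huv
      exact absurd hv (by simp [insertMax])
    obtain ⟨rfl, htail⟩ : M = a ∧ y ++ M :: z = u ++ v := List.cons.inj huv
    have hMuv : M ∈ u ++ v := htail ▸ by simp
    have hMv : M ∈ v := (List.mem_append.1 hMuv).resolve_left (List.nodup_cons.1 hu).1
    obtain ⟨p, q, rfl⟩ := List.append_of_mem hMv
    obtain ⟨-, -, rfl⟩ :=
      (List.append_cons_inj_of_notMem (x₂ := u ++ p) hM.1 hM.2).1 (by simpa using htail)
    exact (List.nodup_cons.1 (List.nodup_append.1 hv).2.1).2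
  · exact fun hz ↦ ⟨M :: y, M :: z, by simp [insertMax], hy.cons hM.1, hz.cons hM.2⟩

theorem length_append_of_nodup {α : Type*} [DecidableEq α] {y z : List α}
    (hcount : ∀ a ∈ y ++ z, (y ++ z).count a = 2) (hy : y.Nodup) (hz : z.Nodup) :
    (y ++ z).length = 2 * y.length := by
  have hperm : y ~ z := (List.perm_ext_iff_of_nodup hy hz).2 fun a ↦ by
    have := hcount a
    grind [List.nodup_iff_count_le_one, List.count_eq_zero]
  rw [List.length_append, ← hperm.length_eq, two_mul]

theorem sum_activeSites_ite_nodup_drop {β : Type*} [AddCommMonoid β] {w : List ℕ}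
    (hcount : ∀ a ∈ w, w.count a = 2) (c : β) :
    ∑ j ∈ activeSites w, (if (w.drop j).Nodup then c else 0) =
      if IsNodupConcat w then c else 0 := by
  have hlength {j : ℕ} (hj : j ∈ activeSites w) (hnodup : (w.drop j).Nodup) :
      w.length = 2 * j := by
    obtain ⟨hjw, hactive⟩ := mem_activeSites.1 hj
    simpa [hjw] using length_append_of_nodup (by simpa using hcount) hactive.1 hnodup
  split_ifs with hw
  · obtain ⟨y, z, rfl, hy, hz⟩ := hw
    have hmem : y.length ∈ activeSites (y ++ z) := length_mem_activeSites_append.2 <|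
      isActive_iff.2 ⟨hy, fun _ _ _ hb ↦ absurd hz hb.not_nodup⟩
    have hdrop {j : ℕ} (hj : j ∈ activeSites (y ++ z)) :
        ((y ++ z).drop j).Nodup ↔ y.length = j :=
      ⟨fun h ↦ by have := hlength hj h; have := hlength hmem (by simpa); omega,
        fun h ↦ by simpa [← h]⟩
    rw [sum_congr rfl fun j hj ↦ if_congr (hdrop hj) rfl rfl, sum_ite_eq, if_pos hmem]
  · exact sum_eq_zero fun j hj ↦ if_neg fun hnodup ↦
      hw ⟨_, _, (w.take_append_drop j).symm, (mem_activeSites.1 hj).2.1, hnodup⟩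

section SiteCounts

variable {M : ℕ} {y z : List ℕ}

theorem two_le_card_activeSites_insertMax (hM : ∀ a ∈ y ++ z, a < M) :
    2 ≤ #(activeSites (insertMax M y z)) := by
  rw [card_activeSites_insertMax hM, Nat.succ_le_succ_iff, one_le_card]
  exact ⟨0, by simp [zero_mem_activeSites]⟩

theorem max_card_activeSites_insertMax (hM : ∀ a ∈ y ++ z, a < M) (hy : y.Nodup) (hyz : y ⊆ z) :
    max #(activeSites (insertMax M y z)) #(activeSites (insertMax M y z).reverse) =
      #(activeSites (insertMax M y z)) := by
  rw [max_eq_left_iff, card_activeSites_reverse_insertMax hM hy hyz]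
  have := two_le_card_activeSites_insertMax hM
  split_ifs <;> omega

theorem min_card_activeSites_insertMax (hM : ∀ a ∈ y ++ z, a < M) (hy : y.Nodup) (hyz : y ⊆ z) :
    min #(activeSites (insertMax M y z)) #(activeSites (insertMax M y z).reverse) =
      if IsNodupConcat (insertMax M y z) then 2 else 1 := by
  have := two_le_card_activeSites_insertMax hM
  simp only [card_activeSites_reverse_insertMax hM hy hyz,
    isNodupConcat_insertMax_iff (notMem_of_forall_lt hM) hy]
  split_ifs <;> omega

end SiteCounts

theorem IsActive.subset_of_count_eq_two {y z : List ℕ} (h : IsActive y z)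
    (hcount : ∀ a ∈ y ++ z, (y ++ z).count a = 2) : y ⊆ z :=
  fun _ ha ↦ h.mem_of_count_eq_two (hcount _ (List.mem_append_left z ha))

theorem IsAdmissible.min_card_activeSites {n : ℕ} {w : List ℕ} (h : IsAdmissible (n + 1) w) :
    min #(activeSites w) #(activeSites w.reverse) = if IsNodupConcat w then 2 else 1 := by
  have hmin {y z : List ℕ} (hyz : IsAdmissible (n + 1) (insertMax (n + 1) y z)) :
      min #(activeSites (insertMax (n + 1) y z)) #(activeSites (insertMax (n + 1) y z).reverse) =
        if IsNodupConcat (insertMax (n + 1) y z) then 2 else 1 := by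
    obtain ⟨hw, hactive⟩ := isAdmissible_insertMax_iff.1 hyz
    exact min_card_activeSites_insertMax hw.1.lt_succ hactive.1
      (hactive.subset_of_count_eq_two hw.1.count_eq_two)
  obtain ⟨y, z, rfl | hw⟩ := h.exists_insertMax
  · exact hmin h
  · have := hmin (hw ▸ h.reverse)
    rwa [← hw, List.reverse_reverse, min_comm, if_congr isNodupConcat_reverse_iff rfl rfl] at this

theorem sum_comp_card_filter_le {α β : Type*} [LinearOrder α] [AddCommMonoid β] (s : Finset α)
    (F : ℕ → β) : ∑ a ∈ s, F #{b ∈ s | b ≤ a} = ∑ i ∈ range #s, F (i + 1) := by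
  induction s using Finset.induction_on_max with
  | empty => simp
  | insert a s ha ih =>
    have ha' : a ∉ s := fun h ↦ (ha a h).false
    have hfilter {c : α} (hc : c ∈ s) : {b ∈ insert a s | b ≤ c} = {b ∈ s | b ≤ c} := by
      rw [filter_insert, if_neg (ha c hc).not_ge]
    have hfilter_self : {b ∈ insert a s | b ≤ a} = insert a s :=
      filter_true_of_mem (by simpa using fun b hb ↦ (ha b hb).le)
    rw [sum_insert ha', card_insert_of_notMem ha', sum_range_succ, ← ih, hfilter_self,
      card_insert_of_notMem ha', add_comm]
    exact congrArg (· + _) (sum_congr rfl fun c hc ↦ by rw [hfilter hc])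

/-- The number of admissible words that arise from a nonempty admissible word `w` by inserting `k`
further maxima, each at an active site and up to reversal, as a closed formula in the site counts.
These are positive, so the first subtraction does not truncate. -/
noncomputable def descendantCount (k : ℕ) (w : List ℕ) : ℤ :=
  (2 * k + max #(activeSites w) #(activeSites w.reverse) - 1).choose k +
    if IsNodupConcat w then ((2 * k + 1).choose k - 2 ^ k : ℤ) else 0

theorem descendantCount_reverse (k : ℕ) (w : List ℕ) :
    descendantCount k w.reverse = descendantCount k w := by
  simp only [descendantCount, List.reverse_reverse, max_comm, isNodupConcat_reverse_iff]

theorem descendantCount_insertMax (k : ℕ) {M : ℕ} {y z : List ℕ} (hM : ∀ a ∈ y ++ z, a < M)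
    (hy : y.Nodup) (hyz : y ⊆ z) :
    descendantCount k (insertMax M y z) =
      (2 * k + #{i ∈ activeSites (y ++ z) | i ≤ y.length}).choose k +
        if z.Nodup then ((2 * k + 1).choose k - 2 ^ k : ℤ) else 0 := by
  rw [descendantCount, max_card_activeSites_insertMax hM hy hyz, card_activeSites_insertMax hM,
    if_congr (isNodupConcat_insertMax_iff (notMem_of_forall_lt hM) hy) rfl rfl,
    ← add_assoc, Nat.add_sub_cancel]

theorem sum_range_choose_eq_choose_sub_choose (m k l : ℕ) :
    ∑ i ∈ range l, ((m + (i + 1)).choose k : ℤ) =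
      (m + l + 1).choose (k + 1) - (m + 1).choose (k + 1) := by
  induction l with
  | zero => simp
  | succ l ih =>
    rw [sum_range_succ, ih, ← add_assoc, Nat.choose_succ_succ (m + l + 1) k]
    push_cast
    ring

theorem IsAdmissible.sum_descendantCount_frontChildren (k : ℕ) {n : ℕ} {w : List ℕ}
    (h : IsAdmissible n w) :
    ∑ v ∈ frontChildren (n + 1) w, descendantCount k v =
      (2 * k + #(activeSites w) + 1).choose (k + 1) - (2 * k + 1).choose k +
        if IsNodupConcat w then ((2 * k + 1).choose k - 2 ^ k : ℤ) else 0 := by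
  have hchild {j : ℕ} (hj : j ∈ activeSites w) :
      descendantCount k (insertMax (n + 1) (w.take j) (w.drop j)) =
        (2 * k + #{i ∈ activeSites w | i ≤ j}).choose k +
          if (w.drop j).Nodup then ((2 * k + 1).choose k - 2 ^ k : ℤ) else 0 := by
    obtain ⟨hjw, hactive⟩ := mem_activeSites.1 hj
    rw [descendantCount_insertMax k (by simpa using h.1.lt_succ) hactive.1
      (hactive.subset_of_count_eq_two (by simpa using h.1.count_eq_two)), List.take_append_drop,
      List.length_take_of_le hjw]
  rw [sum_frontChildren (notMem_of_forall_lt h.1.lt_succ), sum_congr rfl fun j hj ↦ hchild hj,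
    sum_add_distrib, sum_activeSites_ite_nodup_drop h.1.count_eq_two,
    sum_comp_card_filter_le (activeSites w) fun i ↦ ((2 * k + i).choose k : ℤ),
    sum_range_choose_eq_choose_sub_choose, Nat.choose_symm_half]

theorem choose_two_mul_add_two (k : ℕ) :
    (2 * k + 2).choose (k + 1) = 2 * (2 * k + 1).choose k := by
  rw [Nat.choose_succ_succ, Nat.choose_symm_half, ← two_mul]

theorem IsAdmissible.sum_descendantCount_children (k : ℕ) {n : ℕ} {w : List ℕ}
    (h : IsAdmissible (n + 1) w) :
    ∑ v ∈ frontChildren (n + 2) w, descendantCount k v +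
      ∑ v ∈ frontChildren (n + 2) w.reverse, descendantCount k v = descendantCount (k + 1) w := by
  have hmin := h.min_card_activeSites
  have hcentral : ((2 * k + 2).choose (k + 1) : ℤ) = 2 * (2 * k + 1).choose k := by
    exact_mod_cast choose_two_mul_add_two k
  rw [h.sum_descendantCount_frontChildren, h.reverse.sum_descendantCount_frontChildren,
    if_congr isNodupConcat_reverse_iff rfl rfl, descendantCount]
  generalize #(activeSites w) = l, #(activeSites w.reverse) = r at hmin ⊢
  wlog hlr : l ≤ r generalizing l r
  · rw [add_comm, this r l (by rwa [min_comm]) (le_of_not_ge hlr), max_comm]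
  have hindex : 2 * (k + 1) + r - 1 = 2 * k + r + 1 := by omega
  rw [min_eq_left hlr] at hmin
  rw [max_eq_right hlr, hmin, hindex]
  split_ifs
  · push_cast [mul_add]
    ring
  · rw [hcentral]
    ring

theorem admissibleWords_one : admissibleWords 1 = {[1, 1]} := by
  decide

theorem sum_descendantCount_admissibleWords (k m : ℕ) :
    ∑ w ∈ admissibleWords (m + 1), descendantCount k w =
      (2 * (k + m) + 2).choose (k + m + 1) - 2 ^ (k + m) := by
  induction m generalizing k with
  | zero =>
    have hsites : #(activeSites [1, 1]) = 2 := by decide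
    have hconcat : IsNodupConcat [1, 1] := ⟨[1], [1], rfl, by simp, by simp⟩
    simp only [zero_add, add_zero, admissibleWords_one, sum_singleton, descendantCount,
      List.reverse_cons, List.reverse_nil, List.nil_append, List.cons_append, hsites, hconcat,
      max_self, if_true, choose_two_mul_add_two]
    push_cast
    ring
  | succ m ih =>
    rw [sum_admissibleWords_succ m.succ_pos (descendantCount_reverse k),
      sum_congr rfl fun w hw ↦ (mem_admissibleWords.1 hw).sum_descendantCount_children k,
      ih (k + 1), add_right_comm k 1 m, add_assoc k m 1]

theorem descendantCount_zero (w : List ℕ) : descendantCount 0 w = 1 := by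
  simp [descendantCount]

theorem card_admissibleWords_succ (m : ℕ) :
    (#(admissibleWords (m + 1)) : ℤ) = (2 * m + 2).choose (m + 1) - 2 ^ m := by
  simpa [descendantCount_zero] using sum_descendantCount_admissibleWords 0 m

theorem nonnesting_avoid_1322_2231 (n : ℕ) (hn : 1 ≤ n) :
    {w : List ℕ | IsNonnesting n w ∧
      Avoids w [1,3,2,2] ∧ Avoids w [2,2,3,1]}.ncard =
      Nat.choose (2 * n) n - 2 ^ (n - 1) := by
  obtain ⟨m, rfl⟩ := Nat.exists_eq_add_of_le' hn
  have hset : {w : List ℕ | IsNonnesting (m + 1) w ∧ Avoids w [1, 3, 2, 2] ∧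
      Avoids w [2, 2, 3, 1]} = admissibleWords (m + 1) := by
    ext w
    rw [Set.mem_ofPred_eq, mem_coe, mem_admissibleWords, isAdmissible_iff]
  rw [hset, Set.ncard_coe_finset, Nat.add_sub_cancel, mul_add, mul_one]
  refine Nat.eq_sub_of_add_eq ?_
  exact_mod_cast eq_sub_iff_add_eq.1 (card_admissibleWords_succ m)
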